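/- arXiv:1609.09770 — 2 statements merged into one kernel-verified Lean document; each statement's English description precedes it below -/
import Mathlib

section
/- Let a, r, N, n be positive integers with 2rN < a and N | n, and let p_{j,h} ∈ ℚ (1 ≤ j ≤ a, 0 ≤ h ≤ n/N) be the partial fraction coefficients of F. Then for all j and h, (N·d_{n/N})^{a−j} · N^{an/N} · p_{j,h} is an integer, where d_m denotes lcm(1,2,…,m). -/
/-- The rational function
`F(t) = (n/N)!^(a-2rN) (t-rn)_{rn} (t+n+1)_{rn} / ∏_{h=0}^{n/N} (t+Nh)^a`. -/
noncomputable def Frat (a r N n : ℕ) (t : ℚ) : ℚ :=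
  ((n / N).factorial : ℚ) ^ (a - 2 * r * N) *
    (ascPochhammer ℚ (r * n)).eval (t - r * n) *
    (ascPochhammer ℚ (r * n)).eval (t + n + 1) /
    ∏ h ∈ Finset.range (n / N + 1), (t + N * h) ^ a

/-- `p` is the family of partial fraction coefficients of `Frat a r N n`, i.e.
`F(t) = ∑_{h=0}^{n/N} ∑_{j=1}^a p_{j,h}/(t+Nh)^j` away from the poles. -/
def IsPartialFractionCoeffs (a r N n : ℕ) (p : ℕ → ℕ → ℚ) : Prop :=
  ∀ t : ℚ, (∀ h ∈ Finset.range (n / N + 1), t + N * h ≠ 0) →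
    Frat a r N n t =
      ∑ h ∈ Finset.range (n / N + 1), ∑ j ∈ Finset.Icc 1 a, p j h / (t + N * h) ^ j

/-- `d_m = lcm(1, 2, …, m)`. -/
def dlcm (m : ℕ) : ℕ := Finset.lcm (Finset.Icc 1 m) id

open Polynomial in
/-- `m!` divides a product of `m` consecutive shifts of `K X` when `1,…,m` divide `K`. -/
lemma fact_dvd_prod (K : ℤ) : ∀ m : ℕ, (∀ l : ℕ, 1 ≤ l → l ≤ m → (l : ℤ) ∣ K) →
    ∀ c : ℤ, ((m.factorial : ℕ) : ℤ[X]) ∣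
      ∏ i ∈ Finset.range m, (C K * X + (c : ℤ[X]) + (i : ℤ[X])) := by
  intro m
  induction m with
  | zero => intro _ c; simp
  | succ m ih =>
    intro hK c
    have hm := ih (fun l h1 h2 => hK l h1 (by omega))
    have step : ∀ c : ℤ, ∏ i ∈ Finset.range (m+1), (C K * X + ((c+1 : ℤ) : ℤ[X]) + (i : ℤ[X]))
        = ∏ i ∈ Finset.range (m+1), (C K * X + (c : ℤ[X]) + (i : ℤ[X]))
          + ((m : ℤ[X]) + 1) * ∏ i ∈ Finset.range m, (C K * X + ((c+1 : ℤ) : ℤ[X]) + (i : ℤ[X])) := by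
      intro c
      rw [Finset.prod_range_succ, Finset.prod_range_succ' (fun i : ℕ => (C K * X + (c : ℤ[X]) + (i : ℤ[X])))]
      have : ∏ i ∈ Finset.range m, (C K * X + (c : ℤ[X]) + ((i+1 : ℕ) : ℤ[X]))
          = ∏ i ∈ Finset.range m, (C K * X + ((c+1 : ℤ) : ℤ[X]) + (i : ℤ[X])) := by
        refine Finset.prod_congr rfl fun i _ => ?_
        push_cast; ring
      rw [this]
      push_cast
      ring
    have h2 : ∀ c : ℤ, (((m+1).factorial : ℕ) : ℤ[X]) ∣
        ((m : ℤ[X]) + 1) * ∏ i ∈ Finset.range m, (C K * X + ((c+1 : ℤ) : ℤ[X]) + (i : ℤ[X])) := by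
      intro c
      rw [Nat.factorial_succ]
      push_cast
      have := hm (c+1)
      push_cast at this
      exact mul_dvd_mul_left _ this
    induction c using Int.induction_on with
    | zero =>
      rw [Finset.prod_range_succ']
      have e : (((m+1).factorial : ℕ) : ℤ[X]) = (∏ i ∈ Finset.range m, ((i+1 : ℕ) : ℤ[X])) * ((m+1 : ℕ) : ℤ[X]) := by
        rw [← Finset.prod_range_add_one_eq_factorial, Finset.prod_range_succ]
        push_cast; rfl
      rw [e]
      refine mul_dvd_mul (Finset.prod_dvd_prod_of_dvd _ _ fun i hi => ?_) ?_
      · obtain ⟨z, hz⟩ := hK (i+1) (by omega) (by simp at hi; omega)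
        refine ⟨C z * X + 1, ?_⟩
        rw [hz]; simp; ring
      · obtain ⟨z, hz⟩ := hK (m+1) (by omega) le_rfl
        refine ⟨C z * X, ?_⟩
        rw [hz]; simp; ring
    | succ i ihc =>
      rw [step]
      exact dvd_add ihc (h2 _)
    | pred i ihc =>
      have := step (-(i:ℤ) - 1)
      rw [sub_add_cancel] at this
      have h3 := h2 (-(i:ℤ) - 1)
      rw [sub_add_cancel] at h3
      rw [this] at ihc
      exact (dvd_add_left h3).1 ihc

open Polynomial in
lemma fact_pow_dvd_prod (K : ℤ) (m : ℕ) (hK : ∀ l : ℕ, 1 ≤ l → l ≤ m → (l : ℤ) ∣ K) (k : ℕ) :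
    ∀ c : ℤ, ((m.factorial : ℕ) : ℤ[X]) ^ k ∣
      ∏ i ∈ Finset.range (k * m), (C K * X + (c : ℤ[X]) + (i : ℤ[X])) := by
  induction k with
  | zero => intro c; simp
  | succ k ih =>
    intro c
    rw [add_mul, one_mul, Finset.prod_range_add, pow_succ]
    refine mul_dvd_mul (ih c) ?_
    have := fact_dvd_prod K m hK (c + (k * m : ℕ))
    convert this using 2 with i
    push_cast; ring

open Polynomial in
lemma asc_eval (n : ℕ) (x : ℚ) :
    (ascPochhammer ℚ n).eval x = ∏ i ∈ Finset.range n, (x + i) := by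
  induction n with
  | zero => simp
  | succ n ih => rw [Finset.prod_range_succ, ascPochhammer_succ_eval, ih]

lemma prod_diff_dvd (m h : ℕ) (hh : h ≤ m) :
    (∏ i ∈ (Finset.range (m+1)).erase h, ((i : ℤ) - h)) ∣ (m.factorial : ℤ) := by
  have e : (Finset.range (m+1)).erase h = Finset.range h ∪ Finset.Ico (h+1) (m+1) := by
    ext i; simp; omega
  rw [e, Finset.prod_union]
  · have h1 : ∏ i ∈ Finset.range h, ((i : ℤ) - h) = (-1) ^ h * (h.factorial : ℤ) := by
      rw [← Finset.prod_range_reflect, ← Finset.prod_range_add_one_eq_factorial]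
      push_cast
      have : (-1 : ℤ) ^ h = ∏ i ∈ Finset.range h, (-1 : ℤ) := by simp
      rw [this, ← Finset.prod_mul_distrib]
      refine Finset.prod_congr rfl fun i hi => ?_
      have : i < h := by simpa using hi
      have : ((h - 1 - i : ℕ) : ℤ) = h - 1 - i := by omega
      rw [this]; ring
    have h2 : ∏ i ∈ Finset.Ico (h+1) (m+1), ((i : ℤ) - h) = ((m-h).factorial : ℤ) := by
      rw [Finset.prod_Ico_eq_prod_range, ← Finset.prod_range_add_one_eq_factorial]
      push_cast
      refine Finset.prod_congr rfl fun i hi => ?_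
      ring
    rw [h1, h2, mul_assoc]
    rw [(((isUnit_one (M := ℤ)).neg).pow h).mul_left_dvd]
    exact_mod_cast Nat.factorial_mul_factorial_dvd_factorial hh
  · rw [Finset.disjoint_left]; intro i; simp; omega

open Polynomial in
lemma coeff_integral (a : ℕ) (E I : ℤ[X]) (hE : E.coeff 0 = 1) (T R : ℚ[X])
    (h : E.map (Int.castRingHom ℚ) * T = I.map (Int.castRingHom ℚ) + X ^ a * R)
    (k : ℕ) (hk : k < a) : ∃ z : ℤ, T.coeff k = z := by
  have hc : IsCoprime E X := by
    have : X ∣ E - 1 := by rw [X_dvd_iff]; simp [hE]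
    obtain ⟨Y, hY⟩ := this
    exact ⟨1, -Y, by linear_combination hY⟩
  obtain ⟨u, v, huv⟩ := hc.pow_right (n := a)
  refine ⟨(u * I).coeff k, ?_⟩
  have h1 := congrArg (Polynomial.map (Int.castRingHom ℚ)) huv
  simp only [Polynomial.map_add, Polynomial.map_mul, Polynomial.map_pow, map_X, Polynomial.map_one] at h1
  have h2 : T = (u * I).map (Int.castRingHom ℚ)
      + X ^ a * (u.map (Int.castRingHom ℚ) * R + v.map (Int.castRingHom ℚ) * T) := by
    rw [Polynomial.map_mul]
    linear_combination (-T) * h1 + u.map (Int.castRingHom ℚ) * h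
  rw [h2, coeff_add, coeff_X_pow_mul', if_neg (by omega), coeff_map]
  simp

open Polynomial in
lemma main_identity (a r N n : ℕ) (p : ℕ → ℕ → ℚ) (hp : IsPartialFractionCoeffs a r N n p)
    (hN : 0 < N) (K : ℤ) (hK : K ≠ 0) (h0 : ℕ) :
    (((((n / N).factorial : ℕ) : ℤ[X]) ^ (a - 2 * r * N) *
      (∏ i ∈ Finset.range (r * n), (C K * X + ((-(N * h0 : ℤ) - r * n : ℤ) : ℤ[X]) + (i : ℤ[X]))) *
      (∏ i ∈ Finset.range (r * n), (C K * X + ((-(N * h0 : ℤ) + n + 1 : ℤ) : ℤ[X]) + (i : ℤ[X])))).map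
        (Int.castRingHom ℚ)) =
    ∑ h ∈ Finset.range (n / N + 1), (∑ j ∈ Finset.Icc 1 a,
      C (p j h) * (C (K : ℚ) * X + C ((N : ℚ) * ((h : ℚ) - h0))) ^ (a - j)) *
      ∏ h' ∈ (Finset.range (n / N + 1)).erase h,
        (C (K : ℚ) * X + C ((N : ℚ) * ((h' : ℚ) - h0))) ^ a := by
  have hKq : (K : ℚ) ≠ 0 := by exact_mod_cast hK
  refine Polynomial.eq_of_infinite_eval_eq _ _ ?_
  refine Set.Infinite.mono (s := (↑((Finset.range (n / N + 1)).image
    (fun h : ℕ => -((N : ℚ) * ((h : ℚ) - h0)) / K)) : Set ℚ)ᶜ) ?_ (Finset.finite_toSet _).infinite_compl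
  intro v hv
  have hv' : ∀ h ∈ Finset.range (n / N + 1), ((K : ℚ) * v - N * h0) + N * h ≠ 0 := by
    intro h hh h1
    apply hv
    simp only [Finset.coe_image, Set.mem_image]
    refine ⟨h, hh, ?_⟩
    field_simp
    linear_combination -h1
  have key := hp _ hv'
  unfold Frat at key
  rw [asc_eval, asc_eval, div_eq_iff (Finset.prod_ne_zero_iff.2 fun h hh => pow_ne_zero _ (hv' h hh))] at key
  show eval v _ = eval v _
  simp only [Polynomial.map_mul, Polynomial.map_pow, Polynomial.map_prod, Polynomial.map_add, map_C,
    map_X, Polynomial.map_intCast, Polynomial.map_natCast, eval_mul, eval_pow, eval_prod, eval_add,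
    eval_C, eval_X, eval_intCast, eval_natCast, eval_finsetSum]
  convert key using 1
  · congr 1
    · congr 1
      refine Finset.prod_congr rfl fun i _ => ?_
      simp; ring
    · refine Finset.prod_congr rfl fun i _ => ?_
      simp; ring
  · rw [Finset.sum_mul]
    refine Finset.sum_congr rfl fun h hh => ?_
    rw [← Finset.mul_prod_erase _ _ hh, ← mul_assoc]
    have e : ∀ h' : ℕ, (K : ℚ) * v + N * ((h' : ℚ) - h0) = (K : ℚ) * v - N * h0 + N * h' := by
      intro h'; ring
    simp only [e]
    congr 1
    rw [Finset.sum_mul]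
    refine Finset.sum_congr rfl fun j hj => ?_
    have hj' : j ≤ a := (Finset.mem_Icc.1 hj).2
    have := hv' h hh
    rw [div_mul_eq_mul_div, eq_div_iff (pow_ne_zero _ this), mul_assoc, ← pow_add,
      Nat.sub_add_cancel hj']

open Polynomial in
lemma denom_factor (N m d h0 : ℕ) (hd : ∀ l : ℕ, 1 ≤ l → l ≤ m → l ∣ d) (h0m : h0 ≤ m) :
    ∃ E : ℤ[X], E.coeff 0 = 1 ∧
      ∏ h' ∈ (Finset.range (m + 1)).erase h0,
        (C (((N * d : ℕ) : ℤ) : ℚ) * X + C ((N : ℚ) * ((h' : ℚ) - h0))) =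
      C (((N : ℚ) ^ m) * ((∏ i ∈ (Finset.range (m+1)).erase h0, ((i : ℤ) - h0) : ℤ) : ℚ)) *
        E.map (Int.castRingHom ℚ) := by
  have hz : ∀ h' ∈ (Finset.range (m + 1)).erase h0, ((h' : ℤ) - h0) ∣ (d : ℤ) := by
    intro h' hh'
    simp at hh'
    have := hd (((h' : ℤ) - h0).natAbs) (by omega) (by omega)
    exact Int.natAbs_dvd.1 (by exact_mod_cast this)
  choose! z hz using hz
  refine ⟨∏ h' ∈ (Finset.range (m + 1)).erase h0, (C (z h') * X + 1), ?_, ?_⟩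
  · rw [coeff_zero_eq_eval_zero, eval_prod]; simp
  · have hcard : ((Finset.range (m + 1)).erase h0).card = m := by
      rw [Finset.card_erase_of_mem (by simp; omega)]; simp
    have : (N : ℚ) ^ m = ∏ h' ∈ (Finset.range (m + 1)).erase h0, (N : ℚ) := by
      rw [Finset.prod_const, hcard]
    rw [this, Int.cast_prod, ← Finset.prod_mul_distrib, Polynomial.map_prod, map_prod,
      ← Finset.prod_mul_distrib]
    refine Finset.prod_congr rfl fun h' hh' => ?_
    have h1 : (d : ℚ) = ((h' : ℚ) - h0) * z h' := by exact_mod_cast hz h' hh'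
    have h2 : (((N * d : ℕ) : ℤ) : ℚ) = (N : ℚ) * (((h' : ℚ) - h0) * z h') := by
      rw [← h1]; push_cast; ring
    rw [h2]
    simp
    ring

open Polynomial
open Polynomial

/-- Let `a, r, N, n` be positive integers with `2rN < a` and `N ∣ n`, and let `p_{j,h}`
be the partial fraction coefficients of `F`. Then `(N d_{n/N})^{a-j} N^{an/N} p_{j,h} ∈ ℤ`
for all `1 ≤ j ≤ a` and `0 ≤ h ≤ n/N`. -/
theorem partial_fraction_coefficients_integrality
    (a r N n : ℕ) (ha : 0 < a) (hr : 0 < r) (hN : 0 < N) (hn : 0 < n)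
    (hra : 2 * r * N < a) (hNn : N ∣ n)
    (p : ℕ → ℕ → ℚ) (hp : IsPartialFractionCoeffs a r N n p) :
    ∀ j ∈ Finset.Icc 1 a, ∀ h ∈ Finset.range (n / N + 1),
      ∃ z : ℤ, ((N * dlcm (n / N) : ℕ) : ℚ) ^ (a - j) * ((N : ℚ)) ^ (a * (n / N)) * p j h
        = (z : ℚ) := by
  intro j0 hj0 h0 hh0

  have hd : ∀ l : ℕ, 1 ≤ l → l ≤ n / N → l ∣ dlcm (n / N) := by
    intro l h1 h2
    exact Finset.dvd_lcm (f := id) (Finset.mem_Icc.2 ⟨h1, h2⟩)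
  have hd0 : dlcm (n / N) ≠ 0 := by
    unfold dlcm
    rw [Ne, Finset.lcm_eq_zero_iff]
    simp
  have h0m : h0 ≤ n / N := by simp at hh0; omega
  have hid := fun K hK => main_identity a r N n p hp hN K hK h0
  have hrn : r * n = (r * N) * (n / N) := by rw [mul_assoc, Nat.mul_div_cancel' hNn]
  generalize n / N = m at *
  generalize dlcm m = d at *
  specialize hid ((N * d : ℕ) : ℤ) (by
    have := hN.ne'
    exact_mod_cast Nat.mul_ne_zero this hd0)
  have hK : ∀ l : ℕ, 1 ≤ l → l ≤ m → (l : ℤ) ∣ ((N * d : ℕ) : ℤ) := by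
    intro l h1 h2
    exact_mod_cast (hd l h1 h2).mul_left N
  obtain ⟨I1, hI1⟩ := fact_pow_dvd_prod _ m hK (r * N) (-(N * h0 : ℤ) - r * n)
  obtain ⟨I2, hI2⟩ := fact_pow_dvd_prod _ m hK (r * N) (-(N * h0 : ℤ) + n + 1)
  rw [hrn, hI1, hI2] at hid
  have hpow : ((m.factorial : ℕ) : ℤ[X]) ^ (a - 2 * r * N) * ((m.factorial : ℤ[X]) ^ (r * N) * I1) *
      ((m.factorial : ℤ[X]) ^ (r * N) * I2) = (m.factorial : ℤ[X]) ^ a * (I1 * I2) := by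
    have : a = (a - 2 * r * N) + r * N + r * N := by
      have : 2 * r * N = r * N + r * N := by ring
      omega
    conv_rhs => rw [this, pow_add, pow_add]
    ring
  rw [hpow] at hid
  obtain ⟨E, hE0, hE⟩ := denom_factor N m d h0 hd h0m
  obtain ⟨b, hb⟩ := prod_diff_dvd m h0 h0m
  generalize (∏ i ∈ (Finset.range (m+1)).erase h0, ((i : ℤ) - h0)) = w at *
  have hw : (w : ℚ) ≠ 0 := by
    intro h
    have : w = 0 := by exact_mod_cast h
    rw [this, zero_mul] at hb
    exact Nat.factorial_ne_zero m (by exact_mod_cast hb)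
  rw [← Finset.add_sum_erase _ _ hh0, Finset.prod_pow, hE] at hid
  set P : ℚ[X] := ∑ j ∈ Finset.Icc 1 a,
      C (p j h0) * (C (((N * d : ℕ) : ℤ) : ℚ) * X + C ((N : ℚ) * ((h0 : ℚ) - h0))) ^ (a - j) with hP
  have hR : (X : ℚ[X]) ^ a ∣ ∑ h ∈ (Finset.range (m + 1)).erase h0, (∑ j ∈ Finset.Icc 1 a,
      C (p j h) * (C (((N * d : ℕ) : ℤ) : ℚ) * X + C ((N : ℚ) * ((h : ℚ) - h0))) ^ (a - j)) *
      ∏ h' ∈ (Finset.range (m + 1)).erase h,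
        (C (((N * d : ℕ) : ℤ) : ℚ) * X + C ((N : ℚ) * ((h' : ℚ) - h0))) ^ a := by
    refine Finset.dvd_sum fun h hh => Dvd.dvd.mul_left ?_ _
    have hmem : h0 ∈ (Finset.range (m + 1)).erase h :=
      Finset.mem_erase.2 ⟨fun e => (Finset.mem_erase.1 hh).1 e.symm, hh0⟩
    refine dvd_trans ?_ (Finset.dvd_prod_of_mem _ hmem)
    refine pow_dvd_pow_of_dvd ?_ a
    simp
  obtain ⟨R, hR⟩ := hR
  rw [hR] at hid
  have hfin := coeff_integral a (E ^ a) (C (b ^ a) * (I1 * I2))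
    (by rw [coeff_zero_eq_eval_zero, eval_pow, ← coeff_zero_eq_eval_zero, hE0, one_pow])
    (C ((N : ℚ) ^ (a * m)) * P) (-C (((w : ℚ) ^ a)⁻¹) * R) (by
      have hne : (C ((w : ℚ) ^ a) : ℚ[X]) ≠ 0 := by
        rw [Ne, C_eq_zero]; exact pow_ne_zero _ hw
      apply mul_left_cancel₀ hne
      have hcc : (C ((w : ℚ) ^ a) : ℚ[X]) * C (((w : ℚ) ^ a)⁻¹) = 1 := by
        rw [← C_mul, mul_inv_cancel₀ (pow_ne_zero _ hw), C_1]
      have hb' : ((m.factorial : ℕ) : ℚ[X]) = C (w : ℚ) * C (b : ℚ) := by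
        rw [← C_mul, ← Int.cast_mul, ← hb]; simp
      simp only [Polynomial.map_mul, Polynomial.map_pow, Polynomial.map_natCast, map_C, hb'] at hid ⊢
      simp only [map_mul, map_pow, mul_pow, ← pow_mul, mul_comm a m] at hid hcc ⊢
      simp only [eq_intCast, map_pow] at hid hcc ⊢
      linear_combination -hid + X ^ a * R * hcc) (a - j0) (by
        have := Finset.mem_Icc.1 hj0; omega)
  obtain ⟨z, hz⟩ := hfin
  refine ⟨z, ?_⟩
  rw [← hz, coeff_C_mul, hP, finsetSum_coeff, Finset.sum_eq_single j0]
  · rw [sub_self, mul_zero, C_0, add_zero, mul_pow, ← C_pow, coeff_C_mul, coeff_C_mul, coeff_X_pow]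
    simp
    ring
  · intro j hj hne
    rw [sub_self, mul_zero, C_0, add_zero, mul_pow, ← C_pow, coeff_C_mul, coeff_C_mul, coeff_X_pow,
      if_neg]
    · simp
    · have := Finset.mem_Icc.1 hj0
      have := Finset.mem_Icc.1 hj
      omega
  · intro h; exact absurd hj0 h
end

section
/- Let a, r, N, n be positive integers with 2rN < a and N | n, set d₀ = a(n/N + 1) − 2rn, and let P_{k,j}, U_k, V_k be defined by the recursions P_{1,j} = P_j, P_{k,j} = P'_{k−1,j} − (1/z)P_{k−1,j+1} (with P_{k−1,a+1} = 0), U₁ = U, U_k = U'_{k−1} − P_{k−1,1}/(1−z), V₁ = V, V_k = V'_{k−1} + P_{k−1,1}/(z(1−z)). Then for every k with 1 ≤ k ≤ d₀ − 1 and every j with 1 ≤ j ≤ a: (i) z^{k−1} P_{k,j}(z) is a polynomial in z^N of degree at most n (as a polynomial in z), with all coefficients in δ_n^{−1}ℤ where δ_n = (N d_n)^a N^{an/N} and d_n = lcm(1,…,n); (ii) writing z^{k−1}U_k(z) = ∑_{λ=0}^{N−1} z^λ U_{k,λ}(z) and z^{k−1}V_k(z) = ∑_{λ=0}^{N−1}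 z^λ V_{k,λ}(z) with U_{k,λ}, V_{k,λ} ∈ ℚ[z^N, z^{−N}], the functions U_{k,λ} and V_{k,λ} are polynomials in z^N of degree at most n with all coefficients in δ_n^{−1}ℤ. -/
/-- `P_j(z) = ∑_{h=0}^{n/N} p_{j,h} z^{Nh}` for `1 ≤ j ≤ a`, and `0` otherwise. -/
noncomputable def Ppoly (a N n : ℕ) (p : ℕ → ℕ → ℚ) (j : ℕ) : Polynomial ℚ :=
  if 1 ≤ j ∧ j ≤ a then
    ∑ h ∈ Finset.range (n / N + 1), Polynomial.C (p j h) * Polynomial.X ^ (N * h)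
  else 0

noncomputable def Upoly (a N n : ℕ) (p : ℕ → ℕ → ℚ) : Polynomial ℚ :=
  -∑ t ∈ Finset.Icc 1 n,
    Polynomial.C (∑ j ∈ Finset.Icc 1 a, ∑ h ∈ Finset.range ((t - 1) / N + 1),
      p j h / ((t : ℚ) - N * h) ^ j) * Polynomial.X ^ t

noncomputable def Vpoly (a N n : ℕ) (p : ℕ → ℕ → ℚ) : Polynomial ℚ :=
  -∑ t ∈ Finset.range n,
    Polynomial.C (∑ j ∈ Finset.Icc 1 a, ∑ h ∈ Finset.Icc ((t + N) / N) (n / N),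
      p j h / ((N * h : ℚ) - t) ^ j) * Polynomial.X ^ t

/-- Derivative of a rational function. -/
noncomputable def ratDeriv (f : RatFunc ℚ) : RatFunc ℚ :=
  RatFunc.mk (Polynomial.derivative f.num * f.denom - f.num * Polynomial.derivative f.denom)
    (f.denom ^ 2)

/-- `P_{k,j}` (with `k` shifted: `PPk k j = P_{k+1,j}`), defined by `P_{1,j} = P_j` and
`P_{k,j} = P'_{k-1,j} - (1/z) P_{k-1,j+1}`, where `P_{k-1,a+1} = 0`. -/
noncomputable def PPk (a N n : ℕ) (p : ℕ → ℕ → ℚ) : ℕ → ℕ → RatFunc ℚ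
  | 0, j => algebraMap (Polynomial ℚ) (RatFunc ℚ) (Ppoly a N n p j)
  | k + 1, j => ratDeriv (PPk a N n p k j) - (1 / RatFunc.X) * PPk a N n p k (j + 1)

/-- `U_k` (with `k` shifted: `UkF k = U_{k+1}`): `U₁ = U`, `U_k = U'_{k-1} - P_{k-1,1}/(1-z)`. -/
noncomputable def UkF (a N n : ℕ) (p : ℕ → ℕ → ℚ) : ℕ → RatFunc ℚ
  | 0 => algebraMap (Polynomial ℚ) (RatFunc ℚ) (Upoly a N n p)
  | k + 1 => ratDeriv (UkF a N n p k) - (1 / (1 - RatFunc.X)) * PPk a N n p k 1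

/-- `V_k` (with `k` shifted: `VkF k = V_{k+1}`): `V₁ = V`, `V_k = V'_{k-1} + P_{k-1,1}/(z(1-z))`. -/
noncomputable def VkF (a N n : ℕ) (p : ℕ → ℕ → ℚ) : ℕ → RatFunc ℚ
  | 0 => algebraMap (Polynomial ℚ) (RatFunc ℚ) (Vpoly a N n p)
  | k + 1 => ratDeriv (VkF a N n p k) + (1 / (RatFunc.X * (1 - RatFunc.X))) * PPk a N n p k 1

/-- `δ_n = (N d_n)^a N^{an/N}`. -/
def deltan (a N n : ℕ) : ℕ := (N * dlcm n) ^ a * N ^ (a * (n / N))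


open Polynomial in
lemma ascP_eval (k : ℕ) (t : ℚ) : (ascPochhammer ℚ k).eval t = ∏ i ∈ Finset.range k, (t + i) := by
  induction k with
  | zero => simp
  | succ k ih => rw [ascPochhammer_succ_right, Finset.prod_range_succ]; simp [ih]

/-- power series whose `l`-th coefficient times `d^l` is an integer -/
noncomputable def Asub (d : ℕ) : Subring (PowerSeries ℚ) :=
  ((PowerSeries.map (Int.castRingHom ℚ)).range).comap (PowerSeries.rescale (d : ℚ))

lemma mem_Asub {d : ℕ} {g : PowerSeries ℚ} :
    g ∈ Asub d ↔ ∀ l, ∃ z : ℤ, (d : ℚ) ^ l * PowerSeries.coeff l g = z := by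
  unfold Asub
  rw [Subring.mem_comap, RingHom.mem_range]
  constructor
  · rintro ⟨f, hf⟩ l
    refine ⟨PowerSeries.coeff l f, ?_⟩
    have := congrArg (PowerSeries.coeff l) hf
    rw [PowerSeries.coeff_map, PowerSeries.coeff_rescale] at this
    simpa using this.symm
  · intro h
    choose f hf using h
    refine ⟨PowerSeries.mk f, ?_⟩
    ext l
    rw [PowerSeries.coeff_map, PowerSeries.coeff_rescale, hf]
    simp

lemma C_int_mem_Asub (d : ℕ) (z : ℤ) : (PowerSeries.C (z : ℚ)) ∈ Asub d := by
  rw [mem_Asub]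
  intro l
  rw [PowerSeries.coeff_C]
  split_ifs with h
  · exact ⟨z, by simp [h]⟩
  · exact ⟨0, by simp⟩

lemma X_div_mem_Asub (d i : ℕ) (hi : i ∣ d) (hi0 : i ≠ 0) :
    (PowerSeries.C ((i : ℚ)⁻¹) * PowerSeries.X) ∈ Asub d := by
  rw [mem_Asub]
  intro l
  rw [PowerSeries.coeff_C_mul, PowerSeries.coeff_X]
  split_ifs with h
  · obtain ⟨e, rfl⟩ := hi
    refine ⟨e, ?_⟩
    have : (i : ℚ) ≠ 0 := by exact_mod_cast hi0
    subst h
    push_cast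
    field_simp
  · exact ⟨0, by simp⟩

/-- geometric series `1/(1+x/c)` -/
noncomputable def geo (c : ℚ) : PowerSeries ℚ := PowerSeries.mk (fun l => (-c⁻¹) ^ l)

lemma geo_mul (c : ℚ) (hc : c ≠ 0) :
    (PowerSeries.X + PowerSeries.C c) * geo c = PowerSeries.C c := by
  ext l
  rw [add_mul, map_add, PowerSeries.coeff_C_mul, PowerSeries.coeff_C]
  cases l with
  | zero => simp [geo]
  | succ l =>
    rw [PowerSeries.coeff_succ_X_mul]
    simp only [geo, PowerSeries.coeff_mk, pow_succ]
    field_simp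
    simp

lemma geo_mem (d : ℕ) (c : ℤ) (hc : c ≠ 0) (hcd : c ∣ (d : ℤ)) : geo (c : ℚ) ∈ Asub d := by
  rw [mem_Asub]
  intro l
  obtain ⟨e, he⟩ := hcd
  refine ⟨(-e) ^ l, ?_⟩
  have h1 : (d : ℚ) = c * e := by exact_mod_cast he
  have : (c : ℚ) ≠ 0 := by exact_mod_cast hc
  simp only [geo, PowerSeries.coeff_mk]
  rw [← mul_pow, h1]
  push_cast
  congr 1
  field_simp

/-- `binomial (x+c+m-1, m)` -/
noncomputable def gbin (m : ℕ) (c : ℤ) : PowerSeries ℚ :=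
  PowerSeries.C ((m.factorial : ℚ)⁻¹) *
    ∏ i ∈ Finset.range m, (PowerSeries.X + PowerSeries.C ((c : ℚ) + i))

lemma gbin_diff (m : ℕ) (c : ℤ) : gbin (m + 1) (c + 1) - gbin (m + 1) c = gbin m (c + 1) := by
  unfold gbin
  rw [Finset.prod_range_succ, Finset.prod_range_succ' _ m]
  have h : ∀ i : ℕ, ((c : ℚ) + ((i + 1 : ℕ) : ℚ)) = (((c + 1 : ℤ) : ℚ) + (i : ℚ)) := by
    intro i; push_cast; ring
  simp only [h]
  set PP := ∏ i ∈ Finset.range m, (PowerSeries.X + PowerSeries.C (((c + 1 : ℤ) : ℚ) + (i : ℚ))) 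
  have h2 : PowerSeries.C (((m + 1).factorial : ℚ)⁻¹) * PowerSeries.C ((m : ℚ) + 1)
      = PowerSeries.C ((m.factorial : ℚ)⁻¹) := by
    rw [← map_mul]
    congr 1
    rw [Nat.factorial_succ]
    have := Nat.factorial_ne_zero m
    push_cast
    field_simp
  rw [← h2]
  push_cast
  simp only [map_add]
  simp
  ring

lemma gbin_zero_mem (d m : ℕ) (hd : ∀ i, 1 ≤ i → i ≤ m → i ∣ d) : gbin m 0 ∈ Asub d := by
  induction m with
  | zero => unfold gbin; simp
  | succ m ih =>
    rcases Nat.eq_zero_or_pos m with rfl | hm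
    · have := X_div_mem_Asub d 1 (one_dvd _) one_ne_zero
      unfold gbin
      simpa using this
    · have h1 := ih (fun i h1 h2 => hd i h1 (by omega))
      -- gbin (m+1) 0 = gbin m 0 * (x+m)/(m+1); rewrite as x/(m+1) * ∏ (x/i+1)
      clear h1 ih
      have key : gbin (m + 1) 0 = (PowerSeries.C (((m + 1 : ℕ) : ℚ)⁻¹) * PowerSeries.X) *
          ∏ i ∈ Finset.range m,
            (PowerSeries.C (((i + 1 : ℕ) : ℚ)⁻¹) * PowerSeries.X + 1) := by
        unfold gbin
        rw [Finset.prod_range_succ']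
        have : ∀ i ∈ Finset.range m, (PowerSeries.X + PowerSeries.C (((0 : ℤ) : ℚ) + ((i + 1 : ℕ) : ℚ)) : PowerSeries ℚ)
           = PowerSeries.C ((i + 1 : ℕ) : ℚ) * (PowerSeries.C (((i + 1 : ℕ) : ℚ)⁻¹) * PowerSeries.X + 1) := by
          intro i _
          rw [mul_add, ← mul_assoc, ← map_mul, mul_inv_cancel₀ (by positivity)]
          simp
        rw [Finset.prod_congr rfl this, Finset.prod_mul_distrib, ← map_prod]
        have h3 : ∏ i ∈ Finset.range m, ((i + 1 : ℕ) : ℚ) = m.factorial := by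
          rw [← Nat.cast_prod, Finset.prod_range_add_one_eq_factorial]
        rw [h3]
        have h4 : PowerSeries.C (((m + 1).factorial : ℚ)⁻¹) * PowerSeries.C (m.factorial : ℚ)
            = PowerSeries.C (((m + 1 : ℕ) : ℚ)⁻¹) := by
          rw [← map_mul]
          congr 1
          rw [Nat.factorial_succ]
          have := Nat.factorial_ne_zero m
          push_cast
          field_simp
        rw [← h4]
        simp
        ring
      rw [key]
      refine mul_mem (X_div_mem_Asub d _ (hd _ (by omega) le_rfl) (by omega)) (prod_mem ?_)
      intro i hi
      rw [Finset.mem_range] at hi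
      exact add_mem (X_div_mem_Asub d _ (hd _ (by omega) (by omega)) (by omega)) (one_mem _)

lemma gbin_mem (d m : ℕ) (hd : ∀ i, 1 ≤ i → i ≤ m → i ∣ d) (c : ℤ) : gbin m c ∈ Asub d := by
  induction m generalizing c with
  | zero => unfold gbin; simp
  | succ m ih =>
    have ih' := ih (fun i h1 h2 => hd i h1 (by omega))
    induction c using Int.induction_on with
    | zero => exact gbin_zero_mem d _ hd
    | succ i hi =>
      have := gbin_diff m i
      rw [sub_eq_iff_eq_add] at this
      rw [this]
      exact add_mem (ih' _) hi
    | pred i hi =>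
      have := gbin_diff m (-(i : ℤ) - 1)
      rw [sub_add_cancel, sub_eq_iff_eq_add, ← sub_eq_iff_eq_add'] at this
      rw [← this]
      exact sub_mem hi (ih' _)

lemma prod_block_mem (d m q : ℕ) (hd : ∀ i, 1 ≤ i → i ≤ m → i ∣ d) (c : ℤ) :
    PowerSeries.C (((m.factorial : ℚ)⁻¹) ^ q) *
      ∏ i ∈ Finset.range (m * q), (PowerSeries.X + PowerSeries.C ((c : ℚ) + i)) ∈ Asub d := by
  induction q with
  | zero => simp
  | succ q ih =>
    have h := mul_mem ih (gbin_mem d m hd (c + (m * q : ℕ)))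
    unfold gbin at h
    rw [Nat.mul_succ, Finset.prod_range_add]
    convert h using 1
    rw [pow_succ, map_mul]
    have : ∀ i : ℕ, ((c : ℚ) + ((m * q + i : ℕ) : ℚ)) = ((c + ((m * q : ℕ) : ℤ) : ℤ) : ℚ) + i := by
      intro i; push_cast; ring
    simp only [this]
    ring

open Polynomial in
lemma poly_id (a r N m : ℕ) (hN : 0 < N) (p : ℕ → ℕ → ℚ)
    (hp : IsPartialFractionCoeffs a r N (N * m) p) :
    (C ((m.factorial : ℚ) ^ (a - 2 * r * N)) *
      (∏ i ∈ Finset.range (r * (N * m)), (X + C (((-(r * (N * m) : ℕ) : ℤ) : ℚ) + i))) *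
      (∏ i ∈ Finset.range (r * (N * m)), (X + C ((((N * m + 1 : ℕ) : ℤ) : ℚ) + i))) : ℚ[X]) =
    ∑ h ∈ Finset.range (m + 1), ∑ j ∈ Finset.Icc 1 a, C (p j h) *
      (X + C ((N : ℚ) * h)) ^ (a - j) *
      ∏ h' ∈ (Finset.range (m + 1)).erase h, (X + C ((N : ℚ) * h')) ^ a := by
  apply Polynomial.eq_of_infinite_eval_eq
  apply Set.Infinite.mono (s := Set.Ioi 0) _ (Set.Ioi_infinite 0)
  intro t ht
  have ht : 0 < t := ht
  have hne : ∀ h : ℕ, t + (N : ℚ) * h ≠ 0 := by intro h; positivity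
  have h1 := hp t (fun h _ => hne h)
  unfold Frat at h1
  rw [Nat.mul_div_cancel_left m hN, ascP_eval, ascP_eval,
    div_eq_iff (Finset.prod_ne_zero_iff.mpr (fun h _ => pow_ne_zero _ (hne h))), Finset.sum_mul] at h1
  simp only [Set.mem_ofPred_eq]
  rw [eval_mul, eval_mul, eval_C, eval_prod, eval_prod, eval_finsetSum]
  have e1 : ∀ i : ℕ, eval t (X + C (((-(r * (N * m) : ℕ) : ℤ) : ℚ) + i)) =
      t - r * ((N * m : ℕ) : ℚ) + i := by
    intro i; simp; ring
  have e2 : ∀ i : ℕ, eval t (X + C ((((N * m + 1 : ℕ) : ℤ) : ℚ) + i)) =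
      t + ((N * m : ℕ) : ℚ) + 1 + i := by
    intro i; simp; ring
  simp only [e1, e2]
  rw [h1]
  apply Finset.sum_congr rfl
  intro h hh
  rw [eval_finsetSum, Finset.sum_mul]
  apply Finset.sum_congr rfl
  intro j hj
  rw [Finset.mem_Icc] at hj
  rw [← Finset.mul_prod_erase _ _ hh]
  simp only [eval_mul, eval_pow, eval_prod, eval_add, eval_X, eval_C]
  have : (t + (N : ℚ) * h) ^ a = (t + (N : ℚ) * h) ^ j * (t + (N : ℚ) * h) ^ (a - j) := by
    rw [← pow_add]; congr 1; omega
  have h3 := pow_ne_zero j (hne h)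
  rw [this]
  field_simp

lemma prod_erase_dvd (m h0 : ℕ) (hh : h0 ≤ m) :
    (∏ h ∈ (Finset.range (m + 1)).erase h0, ((h : ℤ) - h0)) ∣ (m.factorial : ℤ) := by
  obtain ⟨k, rfl⟩ := Nat.exists_eq_add_of_le hh
  have h1 : (∏ h ∈ (Finset.range (h0 + k + 1)).erase h0, ((h : ℤ) - h0)) =
      ∏ h ∈ Finset.range (h0 + 1 + k), (if h = h0 then 1 else ((h : ℤ) - h0)) := by
    rw [show h0 + k + 1 = h0 + 1 + k by ring]
    rw [← Finset.mul_prod_erase (Finset.range (h0 + 1 + k)) _ (a := h0) (by simp; omega)]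
    rw [if_pos rfl, one_mul]
    apply Finset.prod_congr rfl
    intro h hh
    rw [if_neg (Finset.ne_of_mem_erase hh)]
  rw [h1, Finset.prod_range_add, Finset.prod_range_succ, if_pos rfl, mul_one]
  have h2 : (∏ x ∈ Finset.range k, (if h0 + 1 + x = h0 then 1 else (((h0 + 1 + x : ℕ) : ℤ) - h0))) = k.factorial := by
    rw [← Finset.prod_range_add_one_eq_factorial]
    push_cast
    apply Finset.prod_congr rfl
    intro x _
    rw [if_neg (by omega)]; ring
  have h3 : (∏ x ∈ Finset.range h0, (if x = h0 then 1 else ((x : ℤ) - h0))) = (-1) ^ h0 * h0.factorial := by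
    rw [← Finset.prod_range_add_one_eq_factorial, ← Finset.prod_range_reflect]
    push_cast
    rw [← Finset.card_range h0, ← Finset.prod_const, Finset.card_range, ← Finset.prod_mul_distrib]
    apply Finset.prod_congr rfl
    intro x hx
    rw [Finset.mem_range] at hx
    rw [if_neg (by omega)]
    have : ((h0 - 1 - x : ℕ) : ℤ) = h0 - 1 - x := by omega
    rw [this]; ring
  rw [h2, h3, mul_assoc]
  have h4 : ((h0.factorial : ℤ) * k.factorial) ∣ ((h0 + k).factorial : ℤ) := by
    exact_mod_cast Nat.factorial_mul_factorial_dvd_factorial_add h0 k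
  rcases neg_one_pow_eq_or ℤ h0 with h | h <;> rw [h] <;> simpa using h4

lemma key_integrality (a r N m d : ℕ) (hN : 0 < N) (hra : 2 * r * N < a) (p : ℕ → ℕ → ℚ)
    (hp : IsPartialFractionCoeffs a r N (N * m) p)
    (hd : ∀ i, 1 ≤ i → i ≤ N * m → i ∣ d) (h0 : ℕ) (hh0 : h0 ≤ m) (j : ℕ)
    (hj1 : 1 ≤ j) (hja : j ≤ a) :
    ∃ z : ℤ, (N : ℚ) ^ (a * m) * (d : ℚ) ^ (a - j) * p j h0 = z := by
  have hmem0 : h0 ∈ Finset.range (m + 1) := by simp; omega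
  set S := (Finset.range (m + 1)).erase h0 with hS
  have hScard : S.card = m := by rw [hS, Finset.card_erase_of_mem hmem0]; simp
  let cc : ℕ → ℤ := fun h => (N : ℤ) * h - N * h0
  have hcc : ∀ h ∈ S, cc h ≠ 0 := by
    intro h hh
    have := Finset.ne_of_mem_erase hh
    simp only [cc]
    rw [← mul_sub]
    have : (h : ℤ) - h0 ≠ 0 := by omega
    have : (N : ℤ) ≠ 0 := by omega
    positivity
  have hccd : ∀ h ∈ S, cc h ∣ (d : ℤ) := by
    intro h hh
    have h1 := hcc h hh
    have h2 := Finset.mem_range.mp (Finset.mem_of_mem_erase hh)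
    rw [← Int.natAbs_dvd, Int.natCast_dvd_natCast]
    apply hd
    · exact Nat.one_le_iff_ne_zero.mpr (Int.natAbs_ne_zero.mpr h1)
    · simp only [cc]
      rw [← mul_sub, Int.natAbs_mul, Int.natAbs_natCast]
      apply Nat.mul_le_mul_left
      omega
  -- constant
  let C0 : ℚ := ∏ h ∈ S, (cc h : ℚ)
  have hC0 : C0 ≠ 0 := Finset.prod_ne_zero_iff.mpr (fun h hh => by exact_mod_cast hcc h hh)
  obtain ⟨e, he⟩ := prod_erase_dvd m h0 hh0
  have heC : (N : ℚ) ^ m * m.factorial = C0 * e := by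
    have : C0 = (N : ℚ) ^ m * ((∏ h ∈ S, ((h : ℤ) - h0) : ℤ) : ℚ) := by
      simp only [C0, cc]
      rw [← hScard, ← Finset.prod_const]
      push_cast
      rw [← Finset.prod_mul_distrib]
      exact Finset.prod_congr rfl (fun x _ => by ring)
    rw [this, mul_assoc]
    congr 1
    exact_mod_cast he
  let W : PowerSeries ℚ := ∏ h ∈ S, geo (cc h : ℚ)
  have hW : W ∈ Asub d := prod_mem (fun h hh => geo_mem d _ (hcc h hh) (hccd h hh))
  have hEW : (∏ h ∈ S, (PowerSeries.X + PowerSeries.C (cc h : ℚ))) * W = PowerSeries.C C0 := by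
    simp only [W, C0]
    rw [← Finset.prod_mul_distrib, map_prod]
    exact Finset.prod_congr rfl (fun h hh => geo_mul _ (by exact_mod_cast hcc h hh))
  -- the identity in power series
  have hid := congrArg (Polynomial.aeval (PowerSeries.X + PowerSeries.C (-(N * h0) : ℚ) : PowerSeries ℚ))
    (poly_id a r N m hN p hp)
  have hC : ∀ x : ℚ, algebraMap ℚ (PowerSeries ℚ) x = PowerSeries.C x := fun x => rfl
  simp only [map_mul, map_prod, map_sum, map_pow, map_add, Polynomial.aeval_X, Polynomial.aeval_C, hC] at hid
  simp only [← map_pow, ← map_mul] at hid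
  simp only [add_assoc, ← map_add] at hid
  set PA := ∏ i ∈ Finset.range (r * (N * m)), (PowerSeries.X + PowerSeries.C (-(N * h0 : ℚ) + (((-(r * (N * m) : ℕ) : ℤ) : ℚ) + i))) with hPA
  set PB := ∏ i ∈ Finset.range (r * (N * m)), (PowerSeries.X + PowerSeries.C (-(N * h0 : ℚ) + ((((N * m + 1 : ℕ) : ℤ) : ℚ) + i))) with hPB
  have hmd : ∀ i, 1 ≤ i → i ≤ m → i ∣ d := fun i h1 h2 => hd i h1 (h2.trans (Nat.le_mul_of_pos_left m hN))
  have hA : PowerSeries.C (((m.factorial : ℚ)⁻¹) ^ (r * N)) * PA ∈ Asub d := by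
    have := prod_block_mem d m (r * N) hmd (-(N * h0 : ℤ) + (-(r * (N * m) : ℕ)))
    convert this using 2
    rw [hPA, show r * (N * m) = m * (r * N) by ring]
    apply Finset.prod_congr rfl
    intro i _
    congr 2
    push_cast; ring
  have hB : PowerSeries.C (((m.factorial : ℚ)⁻¹) ^ (r * N)) * PB ∈ Asub d := by
    have := prod_block_mem d m (r * N) hmd (-(N * h0 : ℤ) + ((N * m + 1 : ℕ) : ℤ))
    convert this using 2
    rw [hPB, show r * (N * m) = m * (r * N) by ring]
    apply Finset.prod_congr rfl
    intro i _
    congr 2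
    push_cast; ring
  -- the good series
  let G : PowerSeries ℚ := PowerSeries.C (((e ^ a : ℤ) : ℚ)) *
    (PowerSeries.C (((m.factorial : ℚ)⁻¹) ^ (r * N)) * PA) *
    (PowerSeries.C (((m.factorial : ℚ)⁻¹) ^ (r * N)) * PB) * W ^ a
  have hG : G ∈ Asub d :=
    mul_mem (mul_mem (mul_mem (C_int_mem_Asub d _) hA) hB) (pow_mem hW a)
  -- compute G
  have hG2 : PowerSeries.C (C0 ^ a) * G = PowerSeries.C ((N : ℚ) ^ (a * m)) *
      (PowerSeries.C ((m.factorial : ℚ) ^ (a - 2 * r * N)) * PA * PB) * W ^ a := by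
    have hc : C0 ^ a * ((e ^ a : ℤ) : ℚ) * ((m.factorial : ℚ)⁻¹) ^ (r * N) * ((m.factorial : ℚ)⁻¹) ^ (r * N) =
        (N : ℚ) ^ (a * m) * (m.factorial : ℚ) ^ (a - 2 * r * N) := by
      push_cast
      rw [← mul_pow, ← heC, mul_pow, ← pow_mul, mul_comm m a]
      have hm0 : (m.factorial : ℚ) ≠ 0 := by exact_mod_cast Nat.factorial_ne_zero m
      have : (m.factorial : ℚ) ^ a = (m.factorial : ℚ) ^ (a - 2 * r * N) * (m.factorial : ℚ) ^ (r * N) * (m.factorial : ℚ) ^ (r * N) := by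
        rw [← pow_add, ← pow_add]; congr 1
        have : 2 * r * N = r * N + r * N := by ring
        omega
      rw [this, inv_pow]
      field_simp
    have hc' := congrArg (PowerSeries.C (R := ℚ)) hc
    simp only [map_mul] at hc'
    simp only [G]
    linear_combination (PA * PB * W ^ a) * hc'
  rw [hid] at hG2
  -- isolate h0
  rw [← Finset.add_sum_erase _ _ hmem0] at hG2
  have hdiv : (PowerSeries.X : PowerSeries ℚ) ^ a ∣ ∑ h ∈ (Finset.range (m + 1)).erase h0, ∑ j ∈ Finset.Icc 1 a,
      PowerSeries.C (p j h) * (PowerSeries.X + PowerSeries.C (-(N * h0 : ℚ) + N * h)) ^ (a - j) *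
      ∏ h' ∈ (Finset.range (m + 1)).erase h, (PowerSeries.X + PowerSeries.C (-(N * h0 : ℚ) + N * h')) ^ a := by
    apply Finset.dvd_sum
    intro h hh
    apply Finset.dvd_sum
    intro j _
    apply Dvd.dvd.mul_left
    have : h0 ∈ (Finset.range (m + 1)).erase h :=
      Finset.mem_erase.mpr ⟨(Finset.ne_of_mem_erase hh).symm, hmem0⟩
    refine dvd_trans ?_ (Finset.dvd_prod_of_mem _ this)
    simp
  obtain ⟨Z, hZ⟩ := hdiv
  rw [hZ] at hG2
  have hE : (∏ h ∈ S, (PowerSeries.X + PowerSeries.C (-(N * h0 : ℚ) + N * h)) ^ a) * W ^ a  = PowerSeries.C (C0 ^ a) := by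
    rw [Finset.prod_pow, ← mul_pow, map_pow, ← hEW]
    congr 2
    apply Finset.prod_congr rfl
    intro h _
    congr 2
    simp only [cc]; push_cast; ring
  have hG3 : G = PowerSeries.C ((N : ℚ) ^ (a * m)) * (∑ j ∈ Finset.Icc 1 a, PowerSeries.C (p j h0) * PowerSeries.X ^ (a - j))
      + PowerSeries.X ^ a * (PowerSeries.C ((C0 ^ a)⁻¹) * PowerSeries.C ((N : ℚ) ^ (a * m)) * Z * W ^ a) := by
    have hinv : PowerSeries.C ((C0 ^ a)⁻¹) * PowerSeries.C (C0 ^ a) = 1 := by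
      rw [← map_mul, inv_mul_cancel₀ (pow_ne_zero _ hC0), map_one]
    have hz : (-(N * h0 : ℚ) + N * h0) = 0 := by ring
    rw [hz, map_zero, add_zero, ← Finset.sum_mul] at hG2
    linear_combination PowerSeries.C ((C0 ^ a)⁻¹) * hG2 +
      (PowerSeries.C ((N : ℚ) ^ (a * m)) * (∑ j ∈ Finset.Icc 1 a, PowerSeries.C (p j h0) * PowerSeries.X ^ (a - j))) * (PowerSeries.C ((C0 ^ a)⁻¹) * hE + hinv) - G * hinv
  obtain ⟨z, hz⟩ := mem_Asub.mp hG (a - j)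
  refine ⟨z, ?_⟩
  rw [← hz, hG3, map_add, PowerSeries.coeff_C_mul, PowerSeries.coeff_X_pow_mul',
    if_neg (by omega), add_zero, map_sum, Finset.sum_eq_single j]
  · rw [PowerSeries.coeff_C_mul, PowerSeries.coeff_X_pow, if_pos rfl]; ring
  · intro b hb hbj
    rw [Finset.mem_Icc] at hb
    rw [PowerSeries.coeff_C_mul, PowerSeries.coeff_X_pow, if_neg (by omega), mul_zero]
  · intro h; exact absurd (Finset.mem_Icc.mpr ⟨hj1, hja⟩) h

/-- coefficients of `z^k P_{k+1,j}` -/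
def qco (a N : ℕ) (p : ℕ → ℕ → ℚ) : ℕ → ℕ → ℕ → ℚ
  | 0, j, h => if 1 ≤ j ∧ j ≤ a then p j h else 0
  | k + 1, j, h => ((N : ℚ) * h - k) * qco a N p k j h - qco a N p k (j + 1) h

lemma qco_zero (a N : ℕ) (p : ℕ → ℕ → ℚ) (k j h : ℕ) (hj : a < j) : qco a N p k j h = 0 := by
  induction k generalizing j with
  | zero => simp only [qco]; rw [if_neg (by omega)]
  | succ k ih => simp only [qco]; rw [ih j hj, ih (j + 1) (by omega)]; ring

lemma qco_int (a N : ℕ) (p : ℕ → ℕ → ℚ) (δ : ℚ) (h : ℕ)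
    (hδ : ∀ j, 1 ≤ j → j ≤ a → ∃ z : ℤ, δ * p j h = z) (k j : ℕ) :
    ∃ z : ℤ, δ * qco a N p k j h = z := by
  induction k generalizing j with
  | zero =>
    simp only [qco]
    split_ifs with hj
    · exact hδ j hj.1 hj.2
    · exact ⟨0, by simp⟩
  | succ k ih =>
    obtain ⟨z1, h1⟩ := ih j
    obtain ⟨z2, h2⟩ := ih (j + 1)
    refine ⟨((N : ℤ) * h - k) * z1 - z2, ?_⟩
    simp only [qco]
    push_cast
    rw [← h1, ← h2]; ring

lemma qco_rec (a N m : ℕ) (p : ℕ → ℕ → ℚ) (k : ℕ) (t : ℚ)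
    (ht : ∀ h : ℕ, t + (N : ℚ) * h ≠ 0) :
    (∑ h ∈ Finset.range (m + 1), ∑ j ∈ Finset.range a,
      qco a N p (k + 1) (j + 1) h / (t + N * h) ^ (j + 1)) =
    -(t + k) * (∑ h ∈ Finset.range (m + 1), ∑ j ∈ Finset.range a,
      qco a N p k (j + 1) h / (t + N * h) ^ (j + 1)) + ∑ h ∈ Finset.range (m + 1), qco a N p k 1 h := by
  rw [Finset.mul_sum, ← Finset.sum_add_distrib]
  apply Finset.sum_congr rfl
  intro h _
  have h1 : ∑ j ∈ Finset.range a, qco a N p k (j + 1) h / (t + N * h) ^ j =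
      ∑ j ∈ Finset.range a, qco a N p k (j + 1 + 1) h / (t + N * h) ^ (j + 1) + qco a N p k 1 h := by
    have e1 := Finset.sum_range_succ (fun j => qco a N p k (j + 1) h / (t + N * h) ^ j) a
    have e2 := Finset.sum_range_succ' (fun j => qco a N p k (j + 1) h / (t + N * h) ^ j) a
    rw [e1, qco_zero a N p k (a + 1) h (by omega)] at e2
    simpa using e2
  have h2 : qco a N p k 1 h = ∑ j ∈ Finset.range a, qco a N p k (j + 1) h / (t + N * h) ^ j -
      ∑ j ∈ Finset.range a, qco a N p k (j + 1 + 1) h / (t + N * h) ^ (j + 1) := by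
    rw [h1]; ring
  rw [h2, Finset.mul_sum, ← Finset.sum_sub_distrib, ← Finset.sum_add_distrib]
  apply Finset.sum_congr rfl
  intro j _
  simp only [qco]
  have := ht h
  field_simp
  ring

open Filter Topology in
lemma qco_lim (a N m : ℕ) (ha : 0 < a) (c : ℕ → ℕ → ℚ) :
    Tendsto (fun t : ℚ => t * ∑ h ∈ Finset.range (m + 1), ∑ j ∈ Finset.range a,
      c (j + 1) h / (t + N * h) ^ (j + 1)) atTop (𝓝 (∑ h ∈ Finset.range (m + 1), c 1 h)) := by
  have hrw : (fun t : ℚ => t * ∑ h ∈ Finset.range (m + 1), ∑ j ∈ Finset.range a,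
      c (j + 1) h / (t + N * h) ^ (j + 1)) = fun t : ℚ => ∑ h ∈ Finset.range (m + 1), ∑ j ∈ Finset.range a,
      (t * c (j + 1) h / (t + N * h) ^ (j + 1)) := by
    funext t
    simp only [Finset.mul_sum, mul_div_assoc]
  rw [hrw]
  apply tendsto_finsetSum
  intro h _
  have : c 1 h = ∑ j ∈ Finset.range a, if j = 0 then c 1 h else 0 := by
    rw [Finset.sum_ite_eq' , if_pos (by simpa using ha)]
  rw [this]
  apply tendsto_finsetSum
  intro j _
  have hadd : Tendsto (fun t : ℚ => t + N * h) atTop atTop := tendsto_atTop_add_const_right _ _ tendsto_id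
  have hinv : Tendsto (fun t : ℚ => (t + N * h)⁻¹) atTop (𝓝 0) := tendsto_inv_atTop_zero.comp hadd
  have hone : Tendsto (fun t : ℚ => c (j + 1) h * (1 - (N * h) * (t + N * h)⁻¹) * ((t + N * h)⁻¹) ^ j) atTop
      (𝓝 (c (j + 1) h * (1 - (N * h) * 0) * 0 ^ j)) :=
    (tendsto_const_nhds.mul (tendsto_const_nhds.sub (tendsto_const_nhds.mul hinv))).mul (hinv.pow j)
  have hlim : (c (j + 1) h * (1 - ((N : ℚ) * h) * 0) * 0 ^ j) = if j = 0 then c 1 h else 0 := by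
    rcases Nat.eq_zero_or_pos j with rfl | hj
    · simp
    · rw [if_neg (by omega), zero_pow (by omega)]; ring
  rw [hlim] at hone
  refine hone.congr' ?_
  filter_upwards [eventually_gt_atTop (0 : ℚ)] with t ht
  have : t + (N : ℚ) * h ≠ 0 := by positivity
  rw [inv_pow]
  field_simp
  ring

open Filter Topology Polynomial in
lemma F_lim (a r N m k : ℕ) (hk : k + 2 + 2 * r * (N * m) ≤ a * (m + 1)) (hN : 0 < N) :
    Tendsto (fun t : ℚ => t * ((∏ i ∈ Finset.range k, (-(t + i))) * Frat a r N (N * m) t)) atTop (𝓝 0) := by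
  let P : ℚ[X] := X * (∏ i ∈ Finset.range k, (-(X + C (i : ℚ)))) * (C ((m.factorial : ℚ) ^ (a - 2 * r * N)) *
      (∏ i ∈ Finset.range (r * (N * m)), (X + C (-(r * (N * m) : ℕ) + i : ℚ))) *
      (∏ i ∈ Finset.range (r * (N * m)), (X + C ((N * m : ℕ) + 1 + i : ℚ))))
  let Q : ℚ[X] := ∏ h ∈ Finset.range (m + 1), (X + C ((N : ℚ) * h)) ^ a
  have hPQ : P.degree < Q.degree := by
    have hQ : Q.degree = (a * (m + 1) : ℕ) := by
      simp only [Q]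
      rw [degree_prod]
      simp only [degree_pow, degree_X_add_C]
      simp [mul_comm]
    have hP : P.degree ≤ (1 + k + (0 + r * (N * m) + r * (N * m)) : ℕ) := by
      have hpr : ∀ (s : ℕ) (f : ℕ → ℚ[X]), (∀ i, (f i).degree ≤ 1) →
          (∏ i ∈ Finset.range s, f i).degree ≤ (s : ℕ) := by
        intro s f hf
        refine (degree_prod_le _ _).trans ?_
        refine (Finset.sum_le_sum (fun i _ => hf i)).trans ?_
        simp
      have hmul : ∀ (A B : ℚ[X]) (x y : ℕ), A.degree ≤ x → B.degree ≤ y → (A * B).degree ≤ (x + y : ℕ) := by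
        intro A B x y h1 h2
        push_cast
        exact degree_mul_le_of_le h1 h2
      refine hmul _ _ _ _ (hmul _ _ _ _ (by simp) (hpr _ _ ?_)) (hmul _ _ _ _ (hmul _ _ _ _ ?_ (hpr _ _ ?_)) (hpr _ _ ?_))
      · intro i; rw [degree_neg, degree_X_add_C]
      · exact degree_C_le
      · intro i; rw [degree_X_add_C]
      · intro i; rw [degree_X_add_C]
    rw [hQ]
    refine lt_of_le_of_lt hP ?_
    rw [Nat.cast_lt]
    have : 2 * r * (N * m) = r * (N * m) + r * (N * m) := by ring
    omega
  refine (Polynomial.div_tendsto_atTop_zero_of_degree_lt P Q hPQ).congr ?_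
  intro t
  simp only [P, Q, Frat]
  rw [Nat.mul_div_cancel_left m hN, ascP_eval, ascP_eval]
  simp only [eval_mul, eval_prod, eval_pow, eval_add, eval_neg, eval_X, eval_C]
  have e1 : ∀ i : ℕ, t + (-((r * (N * m) : ℕ) : ℚ) + i) = t - r * ((N * m : ℕ) : ℚ) + i := by
    intro i; push_cast; ring
  have e2 : ∀ i : ℕ, t + (((N * m : ℕ) : ℚ) + 1 + i) = t + ((N * m : ℕ) : ℚ) + 1 + i := by
    intro i; ring
  simp only [e1, e2]
  ring

open Filter Topology in
lemma qco_sum_zero (a r N m : ℕ) (ha : 0 < a) (hN : 0 < N) (p : ℕ → ℕ → ℚ)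
    (hp : IsPartialFractionCoeffs a r N (N * m) p) (k : ℕ)
    (hk : k + 2 + 2 * r * (N * m) ≤ a * (m + 1)) :
    (∀ t : ℚ, 0 < t → (∑ h ∈ Finset.range (m + 1), ∑ j ∈ Finset.range a,
      qco a N p k (j + 1) h / (t + N * h) ^ (j + 1)) =
      (∏ i ∈ Finset.range k, (-(t + i))) * Frat a r N (N * m) t) ∧
    ∑ h ∈ Finset.range (m + 1), qco a N p k 1 h = 0 := by
  have main : ∀ k, k + 2 + 2 * r * (N * m) ≤ a * (m + 1) →
    (∀ t : ℚ, 0 < t → (∑ h ∈ Finset.range (m + 1), ∑ j ∈ Finset.range a,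
      qco a N p k (j + 1) h / (t + N * h) ^ (j + 1)) =
      (∏ i ∈ Finset.range k, (-(t + i))) * Frat a r N (N * m) t) →
    ∑ h ∈ Finset.range (m + 1), qco a N p k 1 h = 0 := by
    intro k hk h
    refine tendsto_nhds_unique (qco_lim a N m ha (qco a N p k)) ?_
    refine (F_lim a r N m k hk hN).congr' ?_
    filter_upwards [eventually_gt_atTop (0 : ℚ)] with t ht
    rw [h t ht]
  induction k with
  | zero =>
    refine ⟨?_, main 0 hk ?_⟩ <;>
    · intro t ht
      rw [hp t (fun h _ => by positivity), Nat.mul_div_cancel_left m hN]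
      simp only [Finset.range_zero, Finset.prod_empty, one_mul]
      apply Finset.sum_congr rfl
      intro h _
      rw [Finset.range_eq_Ico, Finset.sum_Ico_add' (fun j => qco a N p 0 j h / (t + N * h) ^ j) 0 a 1]
      apply Finset.sum_congr
      · ext x; simp only [Finset.mem_Ico, Finset.mem_Icc]; omega
      · intro j hj
        rw [Finset.mem_Icc] at hj
        simp only [qco]; rw [if_pos hj]
  | succ k ih =>
    obtain ⟨h1, h2⟩ := ih (by omega)
    have h3 : (∀ t : ℚ, 0 < t → (∑ h ∈ Finset.range (m + 1), ∑ j ∈ Finset.range a,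
      qco a N p (k + 1) (j + 1) h / (t + N * h) ^ (j + 1)) =
      (∏ i ∈ Finset.range (k + 1), (-(t + i))) * Frat a r N (N * m) t) := by
      intro t ht
      rw [qco_rec a N m p k t (fun h => by positivity), h2, h1 t ht, Finset.prod_range_succ]
      ring
    exact ⟨h3, main _ hk h3⟩

/-! RatFunc part -/
open Polynomial in
lemma quot_deriv_aux (u v P Q : ℚ[X]) (hrel : u * Q = P * v) :
    (derivative u * v - u * derivative v) * Q ^ 2 =
      (derivative P * Q - P * derivative Q) * v ^ 2 := by
  have hd := congrArg derivative hrel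
  rw [derivative_mul, derivative_mul] at hd
  linear_combination (v * Q) * hd - (derivative v * Q + v * derivative Q) * hrel

open Polynomial in
lemma ratDeriv_div (f : RatFunc ℚ) (P Q : ℚ[X]) (hQ : Q ≠ 0)
    (hf : f = algebraMap ℚ[X] (RatFunc ℚ) P / algebraMap ℚ[X] (RatFunc ℚ) Q) :
    ratDeriv f =
      algebraMap ℚ[X] (RatFunc ℚ) (derivative P * Q - P * derivative Q) /
        algebraMap ℚ[X] (RatFunc ℚ) (Q ^ 2) := by
  have hv : f.denom ≠ 0 := RatFunc.denom_ne_zero f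
  have hne : ∀ R : ℚ[X], R ≠ 0 → algebraMap ℚ[X] (RatFunc ℚ) R ≠ 0 :=
    fun R hR => RatFunc.algebraMap_ne_zero hR
  have hrel : f.num * Q = P * f.denom := by
    apply RatFunc.algebraMap_injective ℚ
    rw [map_mul, map_mul, ← div_eq_div_iff (hne _ hv) (hne _ hQ), RatFunc.num_div_denom, hf]
  have hk := quot_deriv_aux _ _ _ _ hrel
  unfold ratDeriv
  rw [RatFunc.mk_eq_div, div_eq_div_iff (hne _ (pow_ne_zero _ hv)) (hne _ (pow_ne_zero _ hQ)),
    ← map_mul, ← map_mul, hk]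

open Polynomial in
lemma ratDeriv_step (k : ℕ) (f : RatFunc ℚ) (Q : ℚ[X])
    (h : RatFunc.X ^ k * f = algebraMap ℚ[X] (RatFunc ℚ) Q) :
    RatFunc.X ^ (k + 1) * ratDeriv f =
      algebraMap ℚ[X] (RatFunc ℚ) (X * derivative Q - C (k : ℚ) * Q) := by
  have hX : (RatFunc.X : RatFunc ℚ) ≠ 0 := RatFunc.X_ne_zero
  have hf : f = algebraMap ℚ[X] (RatFunc ℚ) Q / algebraMap ℚ[X] (RatFunc ℚ) (X ^ k) := by
    rw [map_pow, RatFunc.algebraMap_X, eq_div_iff (pow_ne_zero _ hX), ← h]; ring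
  rw [ratDeriv_div f _ _ (pow_ne_zero _ X_ne_zero) hf]
  rw [← mul_div_assoc, div_eq_iff (RatFunc.algebraMap_ne_zero (pow_ne_zero _ (pow_ne_zero _ X_ne_zero))), ← RatFunc.algebraMap_X, ← map_pow, ← map_mul, ← map_mul]
  congr 1
  have : X * derivative (X ^ k : ℚ[X]) = C (k : ℚ) * X ^ k := by
    cases k with
    | zero => simp
    | succ k => rw [derivative_X_pow]; simp; ring
  linear_combination (-(X ^ k * Q)) * this

/-- polynomial of `z^k P_{k+1,j}` -/
noncomputable def PQ (a N m : ℕ) (p : ℕ → ℕ → ℚ) (k j : ℕ) : Polynomial ℚ :=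
  ∑ h ∈ Finset.range (m + 1), Polynomial.C (qco a N p k j h) * Polynomial.X ^ (N * h)

open Polynomial in
lemma PQ_spec (a N m : ℕ) (hN : 0 < N) (p : ℕ → ℕ → ℚ) (k j : ℕ) :
    RatFunc.X ^ k * PPk a N (N * m) p k j = algebraMap ℚ[X] (RatFunc ℚ) (PQ a N m p k j) := by
  induction k generalizing j with
  | zero =>
    simp only [PPk, PQ, pow_zero, one_mul, qco, Ppoly, Nat.mul_div_cancel_left m hN]
    congr 1
    split_ifs with h <;> simp
  | succ k ih =>
    have hX : (RatFunc.X : RatFunc ℚ) ≠ 0 := RatFunc.X_ne_zero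
    simp only [PPk]
    rw [mul_sub, ratDeriv_step k _ _ (ih j)]
    have : RatFunc.X ^ (k + 1) * (1 / RatFunc.X * PPk a N (N * m) p k (j + 1)) =
        algebraMap ℚ[X] (RatFunc ℚ) (PQ a N m p k (j + 1)) := by
      rw [← ih]; field_simp; ring
    rw [this, ← map_sub]
    congr 1
    unfold PQ
    rw [derivative_sum, Finset.mul_sum, Finset.mul_sum, ← Finset.sum_sub_distrib, ← Finset.sum_sub_distrib]
    apply Finset.sum_congr rfl
    intro h _
    have hx : X * derivative (X ^ (N * h) : ℚ[X]) = C ((N : ℚ) * h) * X ^ (N * h) := by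
      generalize hs : N * h = s
      have : (N : ℚ) * h = s := by rw [← hs]; push_cast; ring
      rw [this]
      cases s with
      | zero => simp
      | succ s => rw [derivative_X_pow]; simp; ring
    simp only [qco]
    rw [derivative_C_mul, C_sub, C_mul, C_sub]
    linear_combination (C (qco a N p k j h)) * hx

/-- degree at most `n` and coefficients in `δ⁻¹ ℤ` -/
def GoodP (n : ℕ) (δ : ℚ) (W : Polynomial ℚ) : Prop :=
  W.natDegree ≤ n ∧ ∀ m, ∃ z : ℤ, δ * W.coeff m = z

lemma GoodP.sub {n : ℕ} {δ : ℚ} {A B : Polynomial ℚ} (hA : GoodP n δ A) (hB : GoodP n δ B) :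
    GoodP n δ (A - B) := by
  refine ⟨(Polynomial.natDegree_sub_le _ _).trans (max_le hA.1 hB.1), fun m => ?_⟩
  obtain ⟨x, hx⟩ := hA.2 m
  obtain ⟨y, hy⟩ := hB.2 m
  exact ⟨x - y, by rw [Polynomial.coeff_sub, mul_sub, hx, hy]; push_cast; rfl⟩

lemma GoodP.neg {n : ℕ} {δ : ℚ} {A : Polynomial ℚ} (hA : GoodP n δ A) : GoodP n δ (-A) := by
  refine ⟨by rw [Polynomial.natDegree_neg]; exact hA.1, fun m => ?_⟩
  obtain ⟨x, hx⟩ := hA.2 m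
  exact ⟨-x, by rw [Polynomial.coeff_neg, mul_neg, hx]; push_cast; rfl⟩

lemma GoodP.add {n : ℕ} {δ : ℚ} {A B : Polynomial ℚ} (hA : GoodP n δ A) (hB : GoodP n δ B) :
    GoodP n δ (A + B) := by
  have := hA.sub hB.neg
  rwa [sub_neg_eq_add] at this

lemma GoodP.sum {ι : Type*} {n : ℕ} {δ : ℚ} (s : Finset ι) (f : ι → Polynomial ℚ)
    (hf : ∀ i ∈ s, GoodP n δ (f i)) : GoodP n δ (∑ i ∈ s, f i) :=
  Finset.sum_induction f (GoodP n δ) (fun _ _ => GoodP.add)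
    ⟨by simp, fun m => ⟨0, by simp⟩⟩ hf

lemma GoodP.monomial {n : ℕ} {δ : ℚ} (c : ℚ) (i : ℕ) (hi : i ≤ n) (hc : ∃ z : ℤ, δ * c = z) :
    GoodP n δ (Polynomial.C c * Polynomial.X ^ i) := by
  refine ⟨(Polynomial.natDegree_C_mul_X_pow_le _ _).trans hi, fun m => ?_⟩
  rw [Polynomial.coeff_C_mul_X_pow]
  split_ifs
  · exact hc
  · exact ⟨0, by simp⟩

lemma exists_int_sum {ι : Type*} (s : Finset ι) (f : ι → ℚ) (δ : ℚ)
    (hf : ∀ i ∈ s, ∃ z : ℤ, δ * f i = z) : ∃ z : ℤ, δ * ∑ i ∈ s, f i = z := by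
  refine Finset.sum_induction f (fun x => ∃ z : ℤ, δ * x = z) ?_ ⟨0, by simp⟩ hf
  rintro x y ⟨u, hu⟩ ⟨v, hv⟩
  exact ⟨u + v, by rw [mul_add, hu, hv]; push_cast; rfl⟩

open Polynomial in
lemma GoodP.deriv {n : ℕ} {δ : ℚ} {W : ℚ[X]} (hW : GoodP n δ W) (k : ℕ) :
    GoodP n δ (X * derivative W - C (k : ℚ) * W) := by
  have hc : ∀ m : ℕ, (X * derivative W - C (k : ℚ) * W).coeff m = ((m : ℚ) - k) * W.coeff m := by
    intro m
    rw [coeff_sub, coeff_C_mul]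
    cases m with
    | zero => simp
    | succ m => rw [coeff_X_mul, coeff_derivative]; push_cast; ring
  refine ⟨?_, fun m => ?_⟩
  · rw [natDegree_le_iff_coeff_eq_zero]
    intro m hm
    rw [hc, natDegree_le_iff_coeff_eq_zero.mp hW.1 m hm, mul_zero]
  · obtain ⟨z, hz⟩ := hW.2 m
    refine ⟨((m : ℤ) - k) * z, ?_⟩
    rw [hc]; push_cast; rw [← hz]; ring

open Polynomial in
lemma GoodP.divide {n : ℕ} {δ : ℚ} {W : ℚ[X]} (hW : GoodP n δ W) (h1 : W.eval 1 = 0) :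
    ∃ T : ℚ[X], W = (1 - X) * T ∧ GoodP n δ T ∧ GoodP n δ (X * T) := by
  obtain ⟨T0, hT0⟩ := dvd_iff_isRoot.mpr (show W.IsRoot 1 from h1)
  have hT : W = (1 - X) * (-T0) := by rw [hT0, C_1]; ring
  generalize -T0 = T at hT
  have hint : ∀ m, ∃ z : ℤ, δ * T.coeff m = z := by
    intro m
    induction m with
    | zero =>
      obtain ⟨z, hz⟩ := hW.2 0
      refine ⟨z, ?_⟩
      rw [← hz, hT]; simp
    | succ m ih =>
      obtain ⟨z, hz⟩ := hW.2 (m + 1)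
      obtain ⟨y, hy⟩ := ih
      refine ⟨z + y, ?_⟩
      push_cast
      rw [← hz, ← hy, hT, sub_mul, one_mul, coeff_sub, coeff_X_mul]; ring
  have hdeg : (X * T).natDegree ≤ n := by
    by_cases hT0 : T = 0
    · simp [hT0]
    · rw [natDegree_X_mul hT0]
      have h2 : (1 - X : ℚ[X]) ≠ 0 := by
        intro h
        have := congrArg (eval 0) h
        simp at this
      have h3 : (1 - X : ℚ[X]).natDegree = 1 := by
        rw [← C_1, natDegree_sub, natDegree_X_sub_C]
      have := hW.1
      rw [hT, natDegree_mul h2 hT0, h3] at this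
      omega
  refine ⟨T, hT, ⟨?_, hint⟩, hdeg, ?_⟩
  · by_cases hT0 : T = 0
    · simp [hT0]
    · rw [natDegree_X_mul hT0] at hdeg; omega
  · intro m
    cases m with
    | zero => exact ⟨0, by simp⟩
    | succ m => rw [coeff_X_mul]; exact hint m

open Polynomial in
lemma GoodP.split {n N : ℕ} {δ : ℚ} {W : ℚ[X]} (hN : 0 < N) (hW : GoodP n δ W) :
    ∃ Uc : ℕ → ℚ[X], algebraMap ℚ[X] (RatFunc ℚ) W = ∑ l ∈ Finset.range N,
        RatFunc.X ^ l * algebraMap ℚ[X] (RatFunc ℚ) (Uc l) ∧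
      ∀ l ∈ Finset.range N, (Uc l).natDegree ≤ n ∧ (∀ m : ℕ, (Uc l).coeff m ≠ 0 → N ∣ m) ∧
          (∀ m : ℕ, ∃ z : ℤ, δ * (Uc l).coeff m = (z : ℚ)) := by
  refine ⟨fun l => ∑ i ∈ (Finset.range (n + 1)).filter (fun i => i % N = l),
    C (W.coeff i) * X ^ (N * (i / N)), ?_, ?_⟩
  · have hs : W = ∑ l ∈ Finset.range N, X ^ l * ∑ i ∈ (Finset.range (n + 1)).filter (fun i => i % N = l),
        C (W.coeff i) * X ^ (N * (i / N)) := by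
      conv_lhs => rw [as_sum_range_C_mul_X_pow' W (Nat.lt_succ_of_le hW.1)]
      rw [← Finset.sum_fiberwise_of_maps_to (t := Finset.range N) (g := fun i => i % N)
        (fun i _ => Finset.mem_range.mpr (Nat.mod_lt _ hN))]
      apply Finset.sum_congr rfl
      intro l _
      rw [Finset.mul_sum]
      apply Finset.sum_congr rfl
      intro i hi
      have hi := (Finset.mem_filter.mp hi).2
      conv_lhs => rw [← Nat.mod_add_div i N, pow_add, Nat.mod_add_div, hi]
      ring
    conv_lhs => rw [hs]
    rw [map_sum]
    simp only [map_mul, map_pow, RatFunc.algebraMap_X]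
  · intro l _
    have hg : GoodP n δ (∑ i ∈ (Finset.range (n + 1)).filter (fun i => i % N = l),
        C (W.coeff i) * X ^ (N * (i / N))) := by
      apply GoodP.sum
      intro i hi
      have hi := Finset.mem_range.mp (Finset.mem_filter.mp hi).1
      exact GoodP.monomial _ _ ((Nat.mul_div_le i N).trans (by omega)) (hW.2 i)
    refine ⟨hg.1, ?_, hg.2⟩
    intro m hm
    rw [finsetSum_coeff] at hm
    obtain ⟨i, _, hi⟩ := Finset.exists_ne_zero_of_sum_ne_zero hm
    rw [coeff_C_mul_X_pow] at hi
    split_ifs at hi with h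
    · exact ⟨_, h⟩
    · exact absurd rfl hi

lemma delta_int (a N m : ℕ) (p : ℕ → ℕ → ℚ) (j h s : ℕ) (hN : 0 < N) (hj1 : 1 ≤ j) (hja : j ≤ a)
    (hs : s ∣ dlcm (N * m)) (hs0 : s ≠ 0)
    (hz : ∃ z : ℤ, (N : ℚ) ^ (a * m) * (dlcm (N * m) : ℚ) ^ (a - j) * p j h = z) :
    ∃ z : ℤ, ((deltan a N (N * m) : ℕ) : ℚ) * (p j h / (s : ℚ) ^ j) = z := by
  obtain ⟨z, hz⟩ := hz
  obtain ⟨e, he⟩ := hs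
  refine ⟨N ^ a * e ^ j * z, ?_⟩
  unfold deltan
  rw [Nat.mul_div_cancel_left m hN]
  have h1 : (dlcm (N * m) : ℚ) ^ a = (dlcm (N * m) : ℚ) ^ (a - j) * (s : ℚ) ^ j * (e : ℚ) ^ j := by
    rw [mul_assoc, ← mul_pow, ← Nat.cast_mul, ← he, ← pow_add]; congr 1; omega
  have hs' : (s : ℚ) ^ j ≠ 0 := pow_ne_zero _ (by exact_mod_cast hs0)
  push_cast
  rw [mul_pow, h1, ← hz]
  field_simp

/-- Let `a, r, N, n` be positive integers with `2rN < a` and `N ∣ n`, and set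
`d₀ = a(n/N + 1) - 2rn`. Then for every `1 ≤ k ≤ d₀ - 1` and `1 ≤ j ≤ a`:
(i) `z^{k-1} P_{k,j}(z)` is a polynomial in `z^N` of degree at most `n`, with all
coefficients in `δ_n⁻¹ ℤ`; (ii) in the decompositions
`z^{k-1} U_k(z) = ∑_{λ=0}^{N-1} z^λ U_{k,λ}(z)` and
`z^{k-1} V_k(z) = ∑_{λ=0}^{N-1} z^λ V_{k,λ}(z)` with `U_{k,λ}, V_{k,λ} ∈ ℚ[z^N, z^{-N}]`,
the `U_{k,λ}` and `V_{k,λ}` are polynomials in `z^N` of degree at most `n` with all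
coefficients in `δ_n⁻¹ ℤ`. -/
theorem coefficients_shape_and_integrality
    (a r N n : ℕ) (ha : 0 < a) (hr : 0 < r) (hN : 0 < N) (hn : 0 < n)
    (hra : 2 * r * N < a) (hNn : N ∣ n)
    (p : ℕ → ℕ → ℚ) (hp : IsPartialFractionCoeffs a r N n p) :
    ∀ k : ℕ, 1 ≤ k → k + 1 ≤ a * (n / N + 1) - 2 * r * n →
      (∀ j ∈ Finset.Icc 1 a, ∃ Q : Polynomial ℚ,
        RatFunc.X ^ (k - 1) * PPk a N n p (k - 1) j
          = algebraMap (Polynomial ℚ) (RatFunc ℚ) Q ∧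
        Q.natDegree ≤ n ∧ (∀ m : ℕ, Q.coeff m ≠ 0 → N ∣ m) ∧
        (∀ m : ℕ, ∃ z : ℤ, ((deltan a N n : ℕ) : ℚ) * Q.coeff m = (z : ℚ))) ∧
      (∃ Uc : ℕ → Polynomial ℚ,
        RatFunc.X ^ (k - 1) * UkF a N n p (k - 1)
          = ∑ l ∈ Finset.range N,
              RatFunc.X ^ l * algebraMap (Polynomial ℚ) (RatFunc ℚ) (Uc l) ∧
        ∀ l ∈ Finset.range N,
          (Uc l).natDegree ≤ n ∧ (∀ m : ℕ, (Uc l).coeff m ≠ 0 → N ∣ m) ∧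
          (∀ m : ℕ, ∃ z : ℤ, ((deltan a N n : ℕ) : ℚ) * (Uc l).coeff m = (z : ℚ))) ∧
      (∃ Vc : ℕ → Polynomial ℚ,
        RatFunc.X ^ (k - 1) * VkF a N n p (k - 1)
          = ∑ l ∈ Finset.range N,
              RatFunc.X ^ l * algebraMap (Polynomial ℚ) (RatFunc ℚ) (Vc l) ∧
        ∀ l ∈ Finset.range N,
          (Vc l).natDegree ≤ n ∧ (∀ m : ℕ, (Vc l).coeff m ≠ 0 → N ∣ m) ∧
          (∀ m : ℕ, ∃ z : ℤ, ((deltan a N n : ℕ) : ℚ) * (Vc l).coeff m = (z : ℚ))) := by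
  obtain ⟨m, rfl⟩ := hNn
  have hdd : ∀ i, 1 ≤ i → i ≤ N * m → i ∣ dlcm (N * m) := fun i h1 h2 =>
    Finset.dvd_lcm (f := id) (Finset.mem_Icc.mpr ⟨h1, h2⟩)
  have hkey := fun h (hh : h ≤ m) j hj1 hja =>
    key_integrality a r N m _ hN hra p hp hdd h hh j hj1 hja
  have hdel : ∀ j h s, h ≤ m → 1 ≤ j → j ≤ a → 1 ≤ s → s ≤ N * m →
      ∃ z : ℤ, ((deltan a N (N * m) : ℕ) : ℚ) * (p j h / (s : ℚ) ^ j) = z := fun j h s hh hj1 hja h1 h2 =>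
    delta_int a N m p j h s hN hj1 hja (hdd s h1 h2) (by omega) (hkey h hh j hj1 hja)
  generalize hδ : ((deltan a N (N * m) : ℕ) : ℚ) = δ at hdel ⊢
  have hdel0 : ∀ h, h ≤ m → ∀ j, 1 ≤ j → j ≤ a → ∃ z : ℤ, δ * p j h = z := by
    intro h hh j h1 h2
    simpa using hdel j h 1 hh h1 h2 le_rfl hn
  have hPQ : ∀ k j, GoodP (N * m) δ (PQ a N m p k j) := by
    intro k j
    apply GoodP.sum
    intro h hh
    have hh' : h ≤ m := by have := Finset.mem_range.mp hh; omega
    exact GoodP.monomial _ _ (Nat.mul_le_mul_left _ hh') (qco_int a N p δ h (hdel0 h hh') k j)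
  have hdm : N * m / N = m := Nat.mul_div_cancel_left m hN
  have hU0 : GoodP (N * m) δ (Upoly a N (N * m) p) := by
    apply GoodP.neg
    apply GoodP.sum
    intro t ht
    rw [Finset.mem_Icc] at ht
    refine GoodP.monomial _ _ ht.2 (exists_int_sum _ _ _ fun j hj => exists_int_sum _ _ _ fun h hh => ?_)
    rw [Finset.mem_Icc] at hj
    have h1 : h ≤ (t - 1) / N := by have := Finset.mem_range.mp hh; omega
    have h2 : N * h ≤ t - 1 := by rw [mul_comm]; exact (Nat.le_div_iff_mul_le hN).mp h1
    have h3 : h ≤ m := Nat.le_of_mul_le_mul_left (show N * h ≤ N * m by omega) hN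
    have := hdel j h (t - N * h) h3 hj.1 hj.2 (by omega) (by omega)
    rw [Nat.cast_sub (by omega)] at this
    simpa using this
  have hV0 : GoodP (N * m) δ (Vpoly a N (N * m) p) := by
    apply GoodP.neg
    apply GoodP.sum
    intro t ht
    rw [Finset.mem_range] at ht
    refine GoodP.monomial _ _ ht.le (exists_int_sum _ _ _ fun j hj => exists_int_sum _ _ _ fun h hh => ?_)
    rw [Finset.mem_Icc] at hj hh
    rw [hdm] at hh
    have h2 : t + 1 ≤ N * h := by
      have e1 := Nat.lt_mul_div_succ t hN
      have e2 : (t + N) / N = t / N + 1 := Nat.add_div_right t hN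
      rw [e2] at hh
      exact e1.trans_le (Nat.mul_le_mul_left N hh.1)
    have h3 : N * h ≤ N * m := Nat.mul_le_mul_left N hh.2
    have := hdel j h (N * h - t) hh.2 hj.1 hj.2 (by omega) (by omega)
    rw [Nat.cast_sub (by omega)] at this
    simpa using this
  have hdiv : ∀ k, k + 2 + 2 * r * (N * m) ≤ a * (m + 1) →
      ∃ T : Polynomial ℚ, PQ a N m p k 1 = (1 - Polynomial.X) * T ∧ GoodP (N * m) δ T ∧
        GoodP (N * m) δ (Polynomial.X * T) := by
    intro k hk
    apply (hPQ k 1).divide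
    have := (qco_sum_zero a r N m ha hN p hp k hk).2
    unfold PQ
    rw [Polynomial.eval_finsetSum]
    simpa using this
  have hX : (RatFunc.X : RatFunc ℚ) ≠ 0 := RatFunc.X_ne_zero
  have hX1 : (1 - RatFunc.X : RatFunc ℚ) ≠ 0 := by
    have : (1 - RatFunc.X : RatFunc ℚ) =
        algebraMap (Polynomial ℚ) (RatFunc ℚ) (1 - Polynomial.X) := by simp
    rw [this]
    apply RatFunc.algebraMap_ne_zero
    intro h
    have := congrArg (Polynomial.eval 0) h
    simp at this
  have hstep : ∀ k (T : Polynomial ℚ), PQ a N m p k 1 = (1 - Polynomial.X) * T →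
      RatFunc.X ^ k * PPk a N (N * m) p k 1 =
        (1 - RatFunc.X) * algebraMap (Polynomial ℚ) (RatFunc ℚ) T := by
    intro k T hT
    rw [PQ_spec a N m hN p k 1, hT]; simp
  have hU : ∀ k, k + 2 + 2 * r * (N * m) ≤ a * (m + 1) → ∃ W : Polynomial ℚ,
      RatFunc.X ^ k * UkF a N (N * m) p k = algebraMap (Polynomial ℚ) (RatFunc ℚ) W ∧
      GoodP (N * m) δ W := by
    intro k
    induction k with
    | zero => intro _; exact ⟨_, by simp [UkF], hU0⟩
    | succ k ih =>
      intro hk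
      obtain ⟨W, hW1, hW2⟩ := ih (by omega)
      obtain ⟨T, hT1, hT2, hT3⟩ := hdiv k (by omega)
      refine ⟨_, ?_, (hW2.deriv k).sub hT3⟩
      simp only [UkF]
      rw [mul_sub, ratDeriv_step k _ _ hW1, map_sub _ _ (Polynomial.X * T)]
      congr 1
      have := hstep k T hT1
      rw [map_mul, RatFunc.algebraMap_X]
      have e : RatFunc.X ^ (k + 1) * (1 / (1 - RatFunc.X) * PPk a N (N * m) p k 1) =
        RatFunc.X * (RatFunc.X ^ k * PPk a N (N * m) p k 1) / (1 - RatFunc.X) := by ring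
      rw [e, this]
      field_simp
  have hV : ∀ k, k + 2 + 2 * r * (N * m) ≤ a * (m + 1) → ∃ W : Polynomial ℚ,
      RatFunc.X ^ k * VkF a N (N * m) p k = algebraMap (Polynomial ℚ) (RatFunc ℚ) W ∧
      GoodP (N * m) δ W := by
    intro k
    induction k with
    | zero => intro _; exact ⟨_, by simp [VkF], hV0⟩
    | succ k ih =>
      intro hk
      obtain ⟨W, hW1, hW2⟩ := ih (by omega)
      obtain ⟨T, hT1, hT2, hT3⟩ := hdiv k (by omega)
      refine ⟨_, ?_, (hW2.deriv k).add hT2⟩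
      simp only [VkF]
      rw [mul_add, ratDeriv_step k _ _ hW1, map_add _ _ T]
      congr 1
      have := hstep k T hT1
      have e : RatFunc.X ^ (k + 1) * (1 / (RatFunc.X * (1 - RatFunc.X)) * PPk a N (N * m) p k 1) =
        RatFunc.X * (RatFunc.X ^ k * PPk a N (N * m) p k 1) / (RatFunc.X * (1 - RatFunc.X)) := by ring
      rw [e, this]
      field_simp
  intro k hk1 hk
  obtain ⟨k, rfl⟩ : ∃ k', k = k' + 1 := ⟨k - 1, by omega⟩
  rw [hdm] at hk
  rw [Nat.add_sub_cancel]
  have hk' : k + 2 + 2 * r * (N * m) ≤ a * (m + 1) := by omega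
  refine ⟨?_, ?_, ?_⟩
  · intro j _
    refine ⟨PQ a N m p k j, PQ_spec a N m hN p k j, (hPQ k j).1, ?_, (hPQ k j).2⟩
    intro i hi
    unfold PQ at hi
    rw [Polynomial.finsetSum_coeff] at hi
    obtain ⟨h, _, hh⟩ := Finset.exists_ne_zero_of_sum_ne_zero hi
    rw [Polynomial.coeff_C_mul_X_pow] at hh
    split_ifs at hh with h1
    · exact ⟨_, h1⟩
    · exact absurd rfl hh
  · obtain ⟨W, hW1, hW2⟩ := hU k hk'
    rw [hW1]
    exact hW2.split hN
  · obtain ⟨W, hW1, hW2⟩ := hV k hk'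
    rw [hW1]
    exact hW2.split hN
end
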